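/- There exists a constant C>0 such that, for all b>0 and all r≥1, e_N(b,r) ≥ e_D(b,r) − C r √b. -/

import Mathlib

open MeasureTheory Real Set Filter Topology

noncomputable section

/-- The open square `Q_r = (-r/2, r/2) × (-r/2, r/2)`. -/
def Qsq (r : ℝ) : Set (ℝ × ℝ) := Ioo (-r/2) (r/2) ×ˢ Ioo (-r/2) (r/2)

/-- The vertical strip `S_R = (-R/2, R/2) × ℝ`. -/
def Strip (R : ℝ) : Set (ℝ × ℝ) := Ioo (-R/2) (R/2) ×ˢ (univ : Set ℝ)

/-- The magnetic potential `A₀(x) = (-x₂/2, x₁/2)` of the constant unit magnetic field. -/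
def A₀ (x : ℝ × ℝ) : ℝ × ℝ := (-x.2 / 2, x.1 / 2)

/-- The magnetic potential `A_van(x) = (-x₂²/2, 0)` generating the field `B(x) = x₂`. -/
def Avan (x : ℝ × ℝ) : ℝ × ℝ := (-x.2 ^ 2 / 2, 0)

/-- The magnetic gradient energy density `|(∇ - iA)u|²` at `x`. -/
def magGradSq (A : ℝ × ℝ → ℝ × ℝ) (u : ℝ × ℝ → ℂ) (x : ℝ × ℝ) : ℝ :=
  ‖fderiv ℝ u x (1, 0) - Complex.I * ((A x).1 : ℂ) * u x‖ ^ 2 +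
  ‖fderiv ℝ u x (0, 1) - Complex.I * ((A x).2 : ℂ) * u x‖ ^ 2

/-- The Ginzburg–Landau functional `F_{b,Q_r}` on the square `Q_r`. -/
def Fsq (b r : ℝ) (u : ℝ × ℝ → ℂ) : ℝ :=
  ∫ x in Qsq r, (b * magGradSq A₀ u x - ‖u x‖ ^ 2 + ‖u x‖ ^ 4 / 2)

/-- (Smooth surrogate of) membership in `H¹(Q_r; ℂ)`. -/
def MemH1sq (u : ℝ × ℝ → ℂ) : Prop := ContDiff ℝ 1 u

/-- (Smooth surrogate of) membership in `H¹₀(Q_r; ℂ)`: vanishing on the boundary. -/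
def MemH10sq (r : ℝ) (u : ℝ × ℝ → ℂ) : Prop :=
  ContDiff ℝ 1 u ∧ ∀ x ∈ frontier (Qsq r), u x = 0

/-- The Dirichlet ground-state energy `e_D(b, r)`. -/
def eD (b r : ℝ) : ℝ := sInf (Fsq b r '' {u | MemH10sq r u})

/-- The Neumann ground-state energy `e_N(b, r)`. -/
def eN (b r : ℝ) : ℝ := sInf (Fsq b r '' {u | MemH1sq u})

/-- The energy density of the strip functional `𝓔_{L,R}` at `x`. -/
def stripDensity (L : ℝ) (u : ℝ × ℝ → ℂ) (x : ℝ × ℝ) : ℝ :=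
  magGradSq Avan u x - L ^ (-(2:ℝ)/3) * ‖u x‖ ^ 2 + (L ^ (-(2:ℝ)/3) / 2) * ‖u x‖ ^ 4

/-- The strip functional `𝓔_{L,R}`. -/
def Estrip (L R : ℝ) (u : ℝ × ℝ → ℂ) : ℝ := ∫ x in Strip R, stripDensity L u x

/-- (Surrogate of) membership in the space `H¹_{mag,0}(S_R)`. -/
def MemH1mag0 (R : ℝ) (u : ℝ × ℝ → ℂ) : Prop :=
  ContDiff ℝ 1 u ∧
  IntegrableOn (fun x => ‖u x‖ ^ 2) (Strip R) ∧
  IntegrableOn (magGradSq Avan u) (Strip R) ∧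
  IntegrableOn (fun x => ‖u x‖ ^ 4) (Strip R) ∧
  ∀ x ∈ frontier (Strip R), u x = 0

/-- The ground-state energy `e_gs(L; R)` of the strip functional. -/
def egs (L R : ℝ) : ℝ := sInf (Estrip L R '' {u | MemH1mag0 R u})

/-- `g : (0,∞) → ℝ` is the thermodynamic limit of the Dirichlet square energies. -/
def IsLimitG (g : ℝ → ℝ) : Prop :=
  ∀ b > 0, Tendsto (fun r => eD b r / r ^ 2) atTop (nhds (g b))

/-- `E : (0,∞) → ℝ` is the large-`R` limit of the strip energies. -/
def IsLimitE (E : ℝ → ℝ) : Prop :=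
  ∀ L > 0, Tendsto (fun R => egs L R / R) atTop (nhds (E L))

/-! The idea is to turn an arbitrary `u` into a Dirichlet competitor by multiplying it by cut-offs
which vanish on a side of the square and equal `1` at distance `√b` from it, one side at a time.
If such a cut-off `1 - s⁴` has gradient `O(s³ / √b)`, then by the Cauchy–Schwarz inequality the
kinetic energy density increases by at most `O(s² |u|²)`. Since `u` need not be bounded, this error
is absorbed by the gain of order `s⁴ |u|⁴` in the quartic term. What remains is a bounded error
density on a layer of area `r √b`. -/

section Cutoff

theorem hasDerivAt_max_zero_pow (n : ℕ) (y : ℝ) :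
    HasDerivAt (fun z : ℝ => max z 0 ^ (n + 2)) ((n + 2) * max y 0 ^ (n + 1)) y := by
  rcases lt_trichotomy y 0 with hy | rfl | hy
  · have hloc : (fun z : ℝ => max z 0 ^ (n + 2)) =ᶠ[𝓝 y] fun _ => 0 := by
      filter_upwards [Iio_mem_nhds hy] with z hz
      simp [max_eq_right (mem_Iio.1 hz).le]
    simpa [max_eq_right hy.le] using (hasDerivAt_const y (0 : ℝ)).congr_of_eventuallyEq hloc
  · have hbig : (fun z : ℝ => max z 0 ^ (n + 2)) =O[𝓝 0] fun z => ‖z - 0‖ ^ (n + 2) := by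
      refine Asymptotics.IsBigO.of_bound 1 (Eventually.of_forall fun z => ?_)
      rw [one_mul, norm_pow, norm_pow, norm_norm, sub_zero]
      gcongr
      simpa using abs_max_le_max_abs_abs (a := z) (b := 0)
    simpa using (hbig.hasFDerivAt (𝕜 := ℝ) (by omega)).hasDerivAt
  · have hloc : (fun z : ℝ => max z 0 ^ (n + 2)) =ᶠ[𝓝 y] fun z => z ^ (n + 2) := by
      filter_upwards [Ioi_mem_nhds hy] with z hz
      rw [max_eq_left (mem_Ioi.1 hz).le]
    simpa [max_eq_left hy.le] using (hasDerivAt_pow (n + 2) y).congr_of_eventuallyEq hloc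

/-- The cut-off profile as a function of the rescaled distance `t` to a side: it vanishes at `t = 0`
and equals `1` for `t ≥ 1`. The exponent `4` is the smallest one for which the square of the
derivative is `O((1 - layerCutoff t) ^ (3 / 2))`. -/
def layerCutoff (t : ℝ) : ℝ := 1 - max (1 - t) 0 ^ 4

theorem layerCutoff_zero : layerCutoff 0 = 0 := by simp [layerCutoff]

theorem layerCutoff_mem_Icc {t : ℝ} (ht : 0 ≤ t) : layerCutoff t ∈ Icc 0 1 := by
  have hmax : max (1 - t) 0 ≤ 1 := max_le (sub_le_self 1 ht) zero_le_one
  exact ⟨sub_nonneg.2 (pow_le_one₀ (le_max_right _ _) hmax), sub_le_self _ (by positivity)⟩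

theorem hasDerivAt_layerCutoff (t : ℝ) :
    HasDerivAt layerCutoff (4 * max (1 - t) 0 ^ 3) t := by
  have h : HasDerivAt layerCutoff (-((2 + 2) * max (1 - t) 0 ^ 3 * -1)) t := by
    exact_mod_cast ((hasDerivAt_max_zero_pow 2 (1 - t)).comp t
      ((hasDerivAt_id t).const_sub 1)).const_sub 1
  exact h.congr_deriv (by ring)

theorem contDiff_layerCutoff : ContDiff ℝ 1 layerCutoff := by
  rw [contDiff_one_iff_deriv, funext fun t => (hasDerivAt_layerCutoff t).deriv]
  exact ⟨fun t => (hasDerivAt_layerCutoff t).differentiableAt, by fun_prop⟩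

end Cutoff

section Density

/-- The Ginzburg–Landau energy density with magnetic potential `A`; the integrand of `Fsq b r` is
the case `A = A₀`. -/
def glDensity (b : ℝ) (A : ℝ × ℝ → ℝ × ℝ) (u : ℝ × ℝ → ℂ) (x : ℝ × ℝ) : ℝ :=
  b * magGradSq A u x - ‖u x‖ ^ 2 + ‖u x‖ ^ 4 / 2

variable {b : ℝ} {A : ℝ × ℝ → ℝ × ℝ} {u : ℝ × ℝ → ℂ} {x : ℝ × ℝ}

theorem magGradSq_nonneg (A : ℝ × ℝ → ℝ × ℝ) (u : ℝ × ℝ → ℂ) (x : ℝ × ℝ) :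
    0 ≤ magGradSq A u x := by
  unfold magGradSq
  positivity

theorem neg_half_le_glDensity (hb : 0 ≤ b) (A : ℝ × ℝ → ℝ × ℝ) (u : ℝ × ℝ → ℂ) (x : ℝ × ℝ) :
    -1 / 2 ≤ glDensity b A u x := by
  unfold glDensity
  linarith [mul_nonneg hb (magGradSq_nonneg A u x), sq_nonneg (‖u x‖ ^ 2 - 1)]

theorem continuous_glDensity (b : ℝ) (hA : Continuous A) (hu : ContDiff ℝ 1 u) :
    Continuous (glDensity b A u) := by
  have _ : Continuous u := hu.continuous
  have _ : Continuous (fderiv ℝ u) := hu.continuous_fderiv one_ne_zero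
  unfold glDensity magGradSq
  fun_prop

theorem magGradSq_smul {χ : ℝ × ℝ → ℝ} (hχ : DifferentiableAt ℝ χ x)
    (hu : DifferentiableAt ℝ u x) :
    magGradSq A (fun y => χ y • u y) x =
      ‖χ x • (fderiv ℝ u x (1, 0) - Complex.I * ((A x).1 : ℂ) * u x)
        + fderiv ℝ χ x (1, 0) • u x‖ ^ 2 +
      ‖χ x • (fderiv ℝ u x (0, 1) - Complex.I * ((A x).2 : ℂ) * u x)
        + fderiv ℝ χ x (0, 1) • u x‖ ^ 2 := by
  rw [magGradSq, fderiv_fun_smul hχ hu]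
  simp only [add_apply, smul_apply, ContinuousLinearMap.smulRight_apply, Complex.real_smul]
  congr 3 <;> ring

theorem norm_smul_add_smul_sq_le {E : Type*} [SeminormedAddCommGroup E] [NormedSpace ℝ E]
    {a c : ℝ} (h : a ^ 2 + c ^ 2 ≤ 1) (p w : E) :
    ‖a • p + c • w‖ ^ 2 ≤ ‖p‖ ^ 2 + ‖w‖ ^ 2 :=
  calc ‖a • p + c • w‖ ^ 2 ≤ (|a| * ‖p‖ + |c| * ‖w‖) ^ 2 := by
        gcongr
        simpa only [norm_smul, Real.norm_eq_abs] using norm_add_le (a • p) (c • w)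
    _ ≤ (|a| ^ 2 + |c| ^ 2) * (‖p‖ ^ 2 + ‖w‖ ^ 2) := by
        linarith [sq_nonneg (|a| * ‖w‖ - |c| * ‖p‖)]
    _ ≤ ‖p‖ ^ 2 + ‖w‖ ^ 2 := by
        rw [sq_abs, sq_abs]
        exact mul_le_of_le_one_left (by positivity) h

theorem magGradSq_smul_le {χ : ℝ × ℝ → ℝ} {c m₁ m₂ : ℝ} (hχ : DifferentiableAt ℝ χ x)
    (hu : DifferentiableAt ℝ u x) (hc : χ x ^ 2 + c ^ 2 ≤ 1)
    (h₁ : fderiv ℝ χ x (1, 0) = c * m₁) (h₂ : fderiv ℝ χ x (0, 1) = c * m₂) :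
    magGradSq A (fun y => χ y • u y) x ≤ magGradSq A u x + (m₁ ^ 2 + m₂ ^ 2) * ‖u x‖ ^ 2 := by
  have hcomp (p : ℂ) (m : ℝ) :
      ‖χ x • p + (c * m) • u x‖ ^ 2 ≤ ‖p‖ ^ 2 + m ^ 2 * ‖u x‖ ^ 2 := by
    simpa only [smul_smul, norm_smul, mul_pow, Real.norm_eq_abs, sq_abs] using
      norm_smul_add_smul_sq_le hc p (m • u x)
  rw [magGradSq_smul hχ hu, h₁, h₂, magGradSq]
  linarith [hcomp (fderiv ℝ u x (1, 0) - Complex.I * ((A x).1 : ℂ) * u x) m₁,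
    hcomp (fderiv ℝ u x (0, 1) - Complex.I * ((A x).2 : ℂ) * u x) m₂]

-- For `S = |u|²` and `σ = s²` this compares the potential energies of `(1 - s⁴) u` and of `u`.
theorem potential_one_sub_sq_le {σ : ℝ} (h₀ : 0 ≤ σ) (h₁ : σ ≤ 1) {S : ℝ} (hS : 0 ≤ S) :
    -((1 - σ ^ 2) ^ 2 * S) + (1 - σ ^ 2) ^ 4 * S ^ 2 / 2
      ≤ -S + S ^ 2 / 2 + 2 * (σ * S) - (σ * S) ^ 2 / 2 := by
  have hσ : σ ^ 2 ≤ 1 := pow_le_one₀ h₀ h₁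
  have hquad : 1 - (1 - σ ^ 2) ^ 2 ≤ 2 * σ := by nlinarith [sq_nonneg (σ ^ 2)]
  have hquart : (1 - σ ^ 2) ^ 4 ≤ 1 - σ ^ 2 :=
    pow_le_of_le_one (by linarith) (by linarith [sq_nonneg σ]) (by norm_num)
  linarith [mul_le_mul_of_nonneg_right hquad hS, mul_le_mul_of_nonneg_right hquart (sq_nonneg S)]

variable {l : ℝ} {φ : ℝ × ℝ → ℝ}

theorem fderiv_layerCutoff_div_apply (hφ : DifferentiableAt ℝ φ x) (v : ℝ × ℝ) :
    fderiv ℝ (fun y => layerCutoff (φ y / l)) x v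
      = max (1 - φ x / l) 0 ^ 3 * (4 * fderiv ℝ φ x v / l) := by
  have h : HasFDerivAt (layerCutoff ∘ fun y => φ y / l)
      ((4 * max (1 - φ x / l) 0 ^ 3) • l⁻¹ • fderiv ℝ φ x) x :=
    (hasDerivAt_layerCutoff (φ x / l)).comp_hasFDerivAt x (hφ.hasFDerivAt.mul_const l⁻¹)
  change fderiv ℝ (layerCutoff ∘ fun y => φ y / l) x v = _
  rw [h.fderiv]
  simp only [smul_apply, smul_eq_mul]
  ring

theorem magGradSq_layerCutoff_smul_le (hl : 0 < l) (hφ : DifferentiableAt ℝ φ x)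
    (hu : DifferentiableAt ℝ u x) (hφx : 0 ≤ φ x)
    (hgrad : fderiv ℝ φ x (1, 0) ^ 2 + fderiv ℝ φ x (0, 1) ^ 2 ≤ 1) :
    magGradSq A (fun y => layerCutoff (φ y / l) • u y) x
      ≤ magGradSq A u x + 16 / l ^ 2 * (max (1 - φ x / l) 0 ^ 2 * ‖u x‖ ^ 2) := by
  obtain ⟨hχ₀, hχ₁⟩ := layerCutoff_mem_Icc (t := φ x / l) (by positivity)
  have hdiff : DifferentiableAt ℝ (fun y => layerCutoff (φ y / l)) x :=
    (hasDerivAt_layerCutoff _).differentiableAt.comp x (hφ.mul_const l⁻¹)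
  have hderiv := fderiv_layerCutoff_div_apply (l := l) hφ
  set s := max (1 - φ x / l) 0 with hs
  have hc : layerCutoff (φ x / l) ^ 2 + (s ^ 2) ^ 2 ≤ 1 :=
    calc layerCutoff (φ x / l) ^ 2 + (s ^ 2) ^ 2
        ≤ layerCutoff (φ x / l) + (s ^ 2) ^ 2 := by
          gcongr
          exact pow_le_of_le_one hχ₀ hχ₁ two_ne_zero
      _ = 1 := by rw [layerCutoff, ← hs]; ring
  calc magGradSq A (fun y => layerCutoff (φ y / l) • u y) x
      ≤ magGradSq A u x + ((s * (4 * fderiv ℝ φ x (1, 0) / l)) ^ 2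
          + (s * (4 * fderiv ℝ φ x (0, 1) / l)) ^ 2) * ‖u x‖ ^ 2 :=
        magGradSq_smul_le hdiff hu hc ((hderiv _).trans (by ring)) ((hderiv _).trans (by ring))
    _ = magGradSq A u x + 16 / l ^ 2 * (s ^ 2 * ‖u x‖ ^ 2)
          * (fderiv ℝ φ x (1, 0) ^ 2 + fderiv ℝ φ x (0, 1) ^ 2) := by ring
    _ ≤ magGradSq A u x + 16 / l ^ 2 * (s ^ 2 * ‖u x‖ ^ 2) :=
        add_le_add le_rfl (mul_le_of_le_one_right (by positivity) hgrad)

theorem glDensity_layerCutoff_smul_le (hb : 0 ≤ b) (hl : 0 < l) (hbl : b ≤ l ^ 2)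
    (hφ : DifferentiableAt ℝ φ x) (hu : DifferentiableAt ℝ u x) (hφx : 0 ≤ φ x)
    (hgrad : fderiv ℝ φ x (1, 0) ^ 2 + fderiv ℝ φ x (0, 1) ^ 2 ≤ 1) :
    glDensity b A (fun y => layerCutoff (φ y / l) • u y) x
      ≤ glDensity b A u x + {y | φ y < l}.indicator (fun _ => 162) x := by
  have hmag := magGradSq_layerCutoff_smul_le (A := A) hl hφ hu hφx hgrad
  set s := max (1 - φ x / l) 0 with hs
  have hs₀ : 0 ≤ s := le_max_right _ _
  have hs₁ : s ≤ 1 := max_le (sub_le_self _ (by positivity)) zero_le_one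
  have hpot := potential_one_sub_sq_le (sq_nonneg s) (pow_le_one₀ hs₀ hs₁) (sq_nonneg ‖u x‖)
  set t := s ^ 2 * ‖u x‖ ^ 2 with ht
  have hkin : b * magGradSq A (fun y => layerCutoff (φ y / l) • u y) x
      ≤ b * magGradSq A u x + 16 * t :=
    calc _ ≤ b * (magGradSq A u x + 16 / l ^ 2 * t) := by gcongr
      _ = b * magGradSq A u x + b / l ^ 2 * (16 * t) := by ring
      _ ≤ b * magGradSq A u x + 16 * t := add_le_add le_rfl <|
        mul_le_of_le_one_left (by positivity) ((div_le_one (by positivity)).2 hbl)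
  have hloss : 18 * t - t ^ 2 / 2 ≤ {y | φ y < l}.indicator (fun _ => (162 : ℝ)) x := by
    by_cases hx : φ x < l
    · rw [indicator_of_mem (show x ∈ {y | φ y < l} from hx)]
      linarith [sq_nonneg (t - 18)]
    · have hs_zero : s = 0 :=
        max_eq_right (sub_nonpos.2 ((one_le_div hl).2 (not_lt.1 hx)))
      simp [ht, hs_zero, hx]
  have hnorm : ‖layerCutoff (φ x / l) • u x‖ ^ 2 = (1 - (s ^ 2) ^ 2) ^ 2 * ‖u x‖ ^ 2 := by
    rw [norm_smul, mul_pow, Real.norm_eq_abs, sq_abs, layerCutoff, ← hs]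
    ring
  have hnorm4 : ‖layerCutoff (φ x / l) • u x‖ ^ 4 = (1 - (s ^ 2) ^ 2) ^ 4 * (‖u x‖ ^ 2) ^ 2 := by
    rw [show 4 = 2 * 2 from rfl, pow_mul, hnorm]
    ring
  unfold glDensity
  rw [hnorm, hnorm4]
  linarith

end Density

section Energy

/-- The Ginzburg–Landau energy on `Ω` with magnetic potential `A`; thus
`Fsq b r = glEnergy b A₀ (Qsq r)`. -/
def glEnergy (b : ℝ) (A : ℝ × ℝ → ℝ × ℝ) (Ω : Set (ℝ × ℝ)) (u : ℝ × ℝ → ℂ) : ℝ :=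
  ∫ x in Ω, glDensity b A u x

variable {b l : ℝ} {A : ℝ × ℝ → ℝ × ℝ} {Ω : Set (ℝ × ℝ)} {u : ℝ × ℝ → ℂ} {φ : ℝ × ℝ → ℝ}

theorem integrableOn_glDensity (b : ℝ) (hA : Continuous A) (hΩ : Bornology.IsBounded Ω)
    (hu : ContDiff ℝ 1 u) : IntegrableOn (glDensity b A u) Ω :=
  ((continuous_glDensity b hA hu).continuousOn.integrableOn_compact
    hΩ.isCompact_closure).mono_set subset_closure

theorem volume_mul_neg_half_le_glEnergy (hb : 0 ≤ b) (hA : Continuous A)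
    (hΩ : Bornology.IsBounded Ω) (hu : ContDiff ℝ 1 u) :
    volume.real Ω * (-1 / 2) ≤ glEnergy b A Ω u := by
  rw [← smul_eq_mul, ← setIntegral_const]
  exact setIntegral_mono (integrableOn_const hΩ.measure_lt_top.ne)
    (integrableOn_glDensity b hA hΩ hu) (neg_half_le_glDensity hb A u)

/-- `φ` can stand for the distance to a part of the boundary of `Ω`: it is a nonnegative function
with `|∇φ| ≤ 1`. The side of a square is described by its signed distance, which is smooth. -/
structure IsSubdistance (Ω : Set (ℝ × ℝ)) (φ : ℝ × ℝ → ℝ) : Prop where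
  contDiff : ContDiff ℝ 1 φ
  nonneg : ∀ x ∈ Ω, 0 ≤ φ x
  gradSq_le_one : ∀ x ∈ Ω, fderiv ℝ φ x (1, 0) ^ 2 + fderiv ℝ φ x (0, 1) ^ 2 ≤ 1

theorem contDiff_layerCutoff_smul (l : ℝ) (hφ : ContDiff ℝ 1 φ) (hu : ContDiff ℝ 1 u) :
    ContDiff ℝ 1 fun x => layerCutoff (φ x / l) • u x :=
  (contDiff_layerCutoff.comp (hφ.div_const l)).smul hu

theorem glEnergy_layerCutoff_smul_le (hb : 0 ≤ b) (hl : 0 < l) (hbl : b ≤ l ^ 2)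
    (hA : Continuous A) (hΩ : Bornology.IsBounded Ω) (hΩm : MeasurableSet Ω)
    (hφ : IsSubdistance Ω φ) (hu : ContDiff ℝ 1 u) :
    glEnergy b A Ω (fun x => layerCutoff (φ x / l) • u x)
      ≤ glEnergy b A Ω u + 162 * volume.real (Ω ∩ {x | φ x < l}) := by
  have hlayer : MeasurableSet {x | φ x < l} :=
    (isOpen_lt hφ.contDiff.continuous continuous_const).measurableSet
  have hint : IntegrableOn ({x | φ x < l}.indicator fun _ => (162 : ℝ)) Ω :=
    (integrableOn_const hΩ.measure_lt_top.ne).indicator hlayer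
  calc glEnergy b A Ω (fun x => layerCutoff (φ x / l) • u x)
      ≤ ∫ x in Ω, (glDensity b A u x + {x | φ x < l}.indicator (fun _ => 162) x) :=
        setIntegral_mono_on
          (integrableOn_glDensity b hA hΩ (contDiff_layerCutoff_smul l hφ.contDiff hu))
          ((integrableOn_glDensity b hA hΩ hu).add hint) hΩm fun x hx =>
            glDensity_layerCutoff_smul_le hb hl hbl (hφ.contDiff.differentiable one_ne_zero x)
              (hu.differentiable one_ne_zero x) (hφ.nonneg x hx) (hφ.gradSq_le_one x hx)
    _ = glEnergy b A Ω u + 162 * volume.real (Ω ∩ {x | φ x < l}) := by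
        rw [integral_add (integrableOn_glDensity b hA hΩ hu) hint, setIntegral_indicator hlayer,
          setIntegral_const, smul_eq_mul, mul_comm, glEnergy]

theorem exists_vanishing_glEnergy_le (hb : 0 ≤ b) (hl : 0 < l) (hbl : b ≤ l ^ 2)
    (hA : Continuous A) (hΩ : Bornology.IsBounded Ω) (hΩm : MeasurableSet Ω) {m : ℝ}
    {Φ : List (ℝ × ℝ → ℝ)} (hΦ : ∀ φ ∈ Φ, IsSubdistance Ω φ)
    (hvol : ∀ φ ∈ Φ, volume.real (Ω ∩ {x | φ x < l}) ≤ m) (hu : ContDiff ℝ 1 u) :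
    ∃ v : ℝ × ℝ → ℂ, ContDiff ℝ 1 v ∧ (∀ φ ∈ Φ, ∀ x, φ x = 0 → v x = 0) ∧
      glEnergy b A Ω v ≤ glEnergy b A Ω u + Φ.length * (162 * m) := by
  induction Φ with
  | nil => exact ⟨u, hu, by simp, by simp⟩
  | cons φ Φ ih =>
    rw [List.forall_mem_cons] at hΦ hvol
    obtain ⟨v, hv, hv₀, hvE⟩ := ih hΦ.2 hvol.2
    refine ⟨fun x => layerCutoff (φ x / l) • v x,
      contDiff_layerCutoff_smul l hΦ.1.contDiff hv, ?_, ?_⟩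
    · refine List.forall_mem_cons.2 ⟨fun x hx => ?_, fun ψ hψ x hx => ?_⟩
      · simp [hx, layerCutoff_zero]
      · simp [hv₀ ψ hψ x hx]
    · rw [List.length_cons, Nat.cast_succ]
      linarith [glEnergy_layerCutoff_smul_le hb hl hbl hA hΩ hΩm hΦ.1 hv, hvol.1]

end Energy

section Square

theorem isBounded_Qsq (r : ℝ) : Bornology.IsBounded (Qsq r) :=
  (Metric.isBounded_Ioo _ _).prod (Metric.isBounded_Ioo _ _)

theorem measurableSet_Qsq (r : ℝ) : MeasurableSet (Qsq r) :=
  measurableSet_Ioo.prod measurableSet_Ioo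

/-- The signed distances to the lines through the four sides of `Qsq r`, positive inside. -/
def sideDistances (r : ℝ) : List (ℝ × ℝ → ℝ) :=
  [fun x => r / 2 - x.1, fun x => r / 2 + x.1, fun x => r / 2 - x.2, fun x => r / 2 + x.2]

theorem exists_sideDistance_eq_zero {r : ℝ} (hr : 0 < r) {x : ℝ × ℝ}
    (hx : x ∈ frontier (Qsq r)) : ∃ φ ∈ sideDistances r, φ x = 0 := by
  rw [Qsq, frontier_prod_eq, frontier_Ioo (by linarith)] at hx
  simp only [sideDistances, List.mem_cons, List.not_mem_nil, or_false, exists_eq_or_imp,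
    exists_eq_left]
  rcases hx with ⟨-, hx | hx⟩ | ⟨hx | hx, -⟩ <;> rw [hx] <;> grind

theorem isSubdistance_of_mem_sideDistances {r : ℝ} :
    ∀ φ ∈ sideDistances r, IsSubdistance (Qsq r) φ := by
  simp only [sideDistances, List.forall_mem_cons]
  refine ⟨⟨by fun_prop, ?_, ?_⟩, ⟨by fun_prop, ?_, ?_⟩, ⟨by fun_prop, ?_, ?_⟩,
    ⟨by fun_prop, ?_, ?_⟩, by simp⟩
  all_goals
    rintro x ⟨⟨_, _⟩, _, _⟩
    first
    | linarith
    | simp [fderiv_const_sub, fderiv_const_add, fderiv_fst, fderiv_snd]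

theorem volume_real_le_of_subset_Ioo_prod_Ioo {s : Set (ℝ × ℝ)} {a₁ b₁ a₂ b₂ : ℝ}
    (h₁ : a₁ ≤ b₁) (h₂ : a₂ ≤ b₂) (hs : s ⊆ Ioo a₁ b₁ ×ˢ Ioo a₂ b₂) :
    volume.real s ≤ (b₁ - a₁) * (b₂ - a₂) := by
  have hbdd : Bornology.IsBounded (Ioo a₁ b₁ ×ˢ Ioo a₂ b₂) :=
    (Metric.isBounded_Ioo _ _).prod (Metric.isBounded_Ioo _ _)
  calc volume.real s ≤ volume.real (Ioo a₁ b₁ ×ˢ Ioo a₂ b₂) :=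
        measureReal_mono hs hbdd.measure_lt_top.ne
    _ = (b₁ - a₁) * (b₂ - a₂) := by
        rw [Measure.volume_eq_prod, measureReal_prod_prod, volume_real_Ioo_of_le h₁,
          volume_real_Ioo_of_le h₂]

theorem volume_real_sideLayer_le {r l : ℝ} (hr : 0 ≤ r) (hl : 0 ≤ l) :
    ∀ φ ∈ sideDistances r, volume.real (Qsq r ∩ {x | φ x < l}) ≤ r * l := by
  have hside : -r / 2 ≤ r / 2 := by linarith
  have hright : r / 2 - l ≤ r / 2 := by linarith
  have hleft : -r / 2 ≤ -r / 2 + l := by linarith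
  simp only [sideDistances, List.forall_mem_cons]
  refine ⟨(volume_real_le_of_subset_Ioo_prod_Ioo hright hside ?_).trans_eq (by ring),
    (volume_real_le_of_subset_Ioo_prod_Ioo hleft hside ?_).trans_eq (by ring),
    (volume_real_le_of_subset_Ioo_prod_Ioo hside hright ?_).trans_eq (by ring),
    (volume_real_le_of_subset_Ioo_prod_Ioo hside hleft ?_).trans_eq (by ring), by simp⟩
  all_goals
    rintro x ⟨⟨⟨_, _⟩, _, _⟩, hx⟩
    rw [mem_ofPred] at hx
    refine ⟨⟨?_, ?_⟩, ?_, ?_⟩ <;> linarith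

theorem exists_memH10sq_glEnergy_le {b r : ℝ} (hb : 0 < b) (hr : 0 < r) {A : ℝ × ℝ → ℝ × ℝ}
    (hA : Continuous A) {u : ℝ × ℝ → ℂ} (hu : MemH1sq u) :
    ∃ v, MemH10sq r v ∧
      glEnergy b A (Qsq r) v ≤ glEnergy b A (Qsq r) u + 648 * r * √b := by
  obtain ⟨v, hv, hv₀, hvE⟩ := exists_vanishing_glEnergy_le hb.le (Real.sqrt_pos.2 hb)
    (Real.sq_sqrt hb.le).ge hA (isBounded_Qsq r) (measurableSet_Qsq r)
    isSubdistance_of_mem_sideDistances (volume_real_sideLayer_le hr.le (Real.sqrt_nonneg b)) hu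
  refine ⟨v, ⟨hv, fun x hx => ?_⟩, hvE.trans_eq ?_⟩
  · obtain ⟨φ, hφ, hφx⟩ := exists_sideDistance_eq_zero hr hx
    exact hv₀ φ hφ x hφx
  · have hlen : (sideDistances r).length = 4 := rfl
    rw [hlen]
    push_cast
    ring

end Square

theorem eN_ge_eD_sub_general :
    ∃ C > (0 : ℝ), ∀ A : ℝ × ℝ → ℝ × ℝ, Continuous A → ∀ b : ℝ, 0 < b → ∀ r : ℝ, 0 < r →
      sInf (glEnergy b A (Qsq r) '' {u | MemH1sq u})
        ≥ sInf (glEnergy b A (Qsq r) '' {u | MemH10sq r u}) - C * r * √b := by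
  refine ⟨648, by norm_num, fun A hA b hb r hr => ?_⟩
  have hbdd : BddBelow (glEnergy b A (Qsq r) '' {u | MemH10sq r u}) := by
    refine ⟨volume.real (Qsq r) * (-1 / 2), ?_⟩
    rintro _ ⟨u, hu, rfl⟩
    exact volume_mul_neg_half_le_glEnergy hb.le hA (isBounded_Qsq r) hu.1
  have hne : (glEnergy b A (Qsq r) '' {u | MemH1sq u}).Nonempty :=
    ⟨_, mem_image_of_mem _ (show MemH1sq 0 from contDiff_const)⟩
  refine le_csInf hne ?_
  rintro _ ⟨u, hu, rfl⟩
  obtain ⟨v, hv, hvE⟩ := exists_memH10sq_glEnergy_le hb hr hA hu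
  linarith [csInf_le hbdd (mem_image_of_mem _ hv)]

/-- `e_N(b,r) ≥ e_D(b,r) - C r √b` for all `b > 0` and `r ≥ 1`. -/
theorem eN_ge_eD_sub :
    ∃ C > (0:ℝ), ∀ b : ℝ, 0 < b → ∀ r : ℝ, 1 ≤ r →
      eN b r ≥ eD b r - C * r * Real.sqrt b := by
  obtain ⟨C, hC, h⟩ := eN_ge_eD_sub_general
  have hA₀ : Continuous A₀ := by unfold A₀; fun_prop
  exact ⟨C, hC, fun b hb r hr => h A₀ hA₀ b hb r (zero_lt_one.trans_le hr)⟩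

end
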